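/- arXiv:1604.08707 — 4 statements merged into one kernel-verified Lean document; each statement's English description precedes it below -/
import Mathlib

section
/- Let r0, r1, i0, i1 be nonnegative reals with r1 ≤ r0, r0² + r1² = 1, and i0² + i1² = 1. Then there exist reals P₁, P₂ with P₁ ≥ 0, P₂ ≥ 0, P₁ + P₂ = 1, i0²P₁ + i1²P₂ = r0², and i0²P₂ + i1²P₁ = r1² if and only if r0 ≤ max{i0, i1}. -/
theorem aux_exists (a b c d : ℝ) (h : a + b = 1) (h2 : c + d = 1) (hd : d ≤ c) (hc : c ≤ a) :
    ∃ P1 P2 : ℝ, 0 ≤ P1 ∧ 0 ≤ P2 ∧ P1 + P2 = 1 ∧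
      a * P1 + b * P2 = c ∧ a * P2 + b * P1 = d := by
  rcases eq_or_ne a b with hab | hab
  · exact ⟨1, 0, by norm_num, by norm_num, by norm_num, by linarith, by linarith⟩
  · have hne : a - b ≠ 0 := sub_ne_zero.mpr hab
    have hd' : d = a + b - c := by linarith
    refine ⟨(c - b) / (a - b), (a - c) / (a - b), div_nonneg (by linarith) (by linarith),
      div_nonneg (by linarith) (by linarith), ?_, ?_, ?_⟩
    · field_simp
      ring
    · field_simp
      ring
    · rw [hd']
      field_simp
      ring

theorem stmt_1 (r0 r1 i0 i1 : ℝ)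
    (hr0 : 0 ≤ r0) (hr1 : 0 ≤ r1) (hi0 : 0 ≤ i0) (hi1 : 0 ≤ i1)
    (hr10 : r1 ≤ r0) (hrnorm : r0 ^ 2 + r1 ^ 2 = 1) (hinorm : i0 ^ 2 + i1 ^ 2 = 1) :
    (∃ P1 P2 : ℝ, 0 ≤ P1 ∧ 0 ≤ P2 ∧ P1 + P2 = 1 ∧
      i0 ^ 2 * P1 + i1 ^ 2 * P2 = r0 ^ 2 ∧ i0 ^ 2 * P2 + i1 ^ 2 * P1 = r1 ^ 2)
    ↔ r0 ≤ max i0 i1 := by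
  have hsq : r1 ^ 2 ≤ r0 ^ 2 := by gcongr
  constructor
  · rintro ⟨P1, P2, h1, h2, hs, he, -⟩
    have hm0 : i0 ^ 2 ≤ (max i0 i1) ^ 2 := by
      gcongr
      exact le_max_left _ _
    have hm1 : i1 ^ 2 ≤ (max i0 i1) ^ 2 := by
      gcongr
      exact le_max_right _ _
    refine (fun h h0 => (pow_le_pow_iff_left₀ hr0 h0 two_ne_zero).mp h : r0 ^ 2 ≤ (max i0 i1) ^ 2 → 0 ≤ max i0 i1 → r0 ≤ max i0 i1) ?_ (hi0.trans (le_max_left _ _))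
    have e1 := mul_le_mul_of_nonneg_right hm0 h1
    have e2 := mul_le_mul_of_nonneg_right hm1 h2
    have e3 : (max i0 i1) ^ 2 * P1 + (max i0 i1) ^ 2 * P2 = (max i0 i1) ^ 2 := by
      rw [← mul_add, hs, mul_one]
    linarith
  · intro h
    rcases le_max_iff.mp h with h | h
    · exact aux_exists _ _ _ _ hinorm hrnorm hsq (by gcongr)
    · obtain ⟨P1, P2, a, b, c, d, e⟩ := aux_exists (i1 ^ 2) (i0 ^ 2) _ _
        (by linarith) hrnorm hsq (by gcongr)
      exact ⟨P2, P1, b, a, by linarith, by linarith, by linarith⟩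
end

section
/- Let θ, φ ∈ ℝ, let |i⟩ = (cos(θ/2), e^{iφ} sin(θ/2)) ∈ ℂ², and let P₁, P₂ be reals. Set i0 = cos(θ/2), i1 = sin(θ/2), U₀ = I, U₁ = σ₃, U₂ = σ₁, U₃ = −σ₃σ₁, and p₀ = p₁ = P₁/2, p₂ = p₃ = P₂/2. Then Σ_{m=0}^{3} p_m · U_m† |i⟩⟨i| U_m = (i0²P₁ + i1²P₂)|0⟩⟨0| + (i1²P₁ + i0²P₂)|1⟩⟨1|; in particular the result is a diagonal matrix. -/
open Matrix Complex

noncomputable def σ₁ : Matrix (Fin 2) (Fin 2) ℂ := !![0, 1; 1, 0]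
noncomputable def σ₃ : Matrix (Fin 2) (Fin 2) ℂ := !![1, 0; 0, -1]

/-- The outer product |ψ⟩⟨ψ| of a vector with itself. -/
noncomputable def outer {n : Type*} (ψ : n → ℂ) : Matrix n n ℂ :=
  Matrix.vecMulVec ψ (star ψ)

theorem stmt_6 (θ φ P1 P2 : ℝ) :
    let iket : Fin 2 → ℂ :=
      ![(Real.cos (θ / 2) : ℂ), Complex.exp (Complex.I * (φ : ℂ)) * (Real.sin (θ / 2) : ℂ)]
    let U : Fin 4 → Matrix (Fin 2) (Fin 2) ℂ := ![1, σ₃, σ₁, -(σ₃ * σ₁)]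
    let p : Fin 4 → ℝ := ![P1 / 2, P1 / 2, P2 / 2, P2 / 2]
    ∑ m : Fin 4, (p m : ℂ) • ((U m)ᴴ * outer iket * U m) =
      ((Real.cos (θ / 2) ^ 2 * P1 + Real.sin (θ / 2) ^ 2 * P2 : ℝ) : ℂ) •
          outer (![1, 0] : Fin 2 → ℂ) +
        ((Real.sin (θ / 2) ^ 2 * P1 + Real.cos (θ / 2) ^ 2 * P2 : ℝ) : ℂ) •
          outer (![0, 1] : Fin 2 → ℂ) := by
  intro iket U p
  have he : Complex.exp (Complex.I * (φ : ℂ)) *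
      (starRingEnd ℂ) (Complex.exp (Complex.I * (φ : ℂ))) = 1 := by
    rw [← Complex.exp_conj, ← Complex.exp_add]
    simp
  have hc : (starRingEnd ℂ) (Real.cos (θ / 2) : ℂ) = (Real.cos (θ / 2) : ℂ) :=
    Complex.conj_ofReal _
  have hs : (starRingEnd ℂ) (Real.sin (θ / 2) : ℂ) = (Real.sin (θ / 2) : ℂ) :=
    Complex.conj_ofReal _
  simp only [iket, U, p]
  generalize Complex.exp (Complex.I * (φ : ℂ)) = e at *
  generalize Real.cos (θ / 2) = c at *
  generalize Real.sin (θ / 2) = s at *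
  have ho : ∀ x y : ℂ, outer ![x, y] = !![x * (starRingEnd ℂ) x, x * (starRingEnd ℂ) y;
      y * (starRingEnd ℂ) x, y * (starRingEnd ℂ) y] := by
    intro x y
    ext a b
    fin_cases a <;> fin_cases b <;> rfl
  have h1 : σ₁ᴴ = !![0, 1; 1, 0] := by
    ext a b
    fin_cases a <;> fin_cases b <;> simp [σ₁, Matrix.conjTranspose_apply]
  have h3 : σ₃ᴴ = !![1, 0; 0, -1] := by
    ext a b
    fin_cases a <;> fin_cases b <;> simp [σ₃, Matrix.conjTranspose_apply]
  simp only [ho, Fin.sum_univ_four, Matrix.cons_val, Matrix.conjTranspose_neg,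
    Matrix.conjTranspose_mul, Matrix.conjTranspose_one, h1, h3, one_mul, mul_one]
  simp only [σ₁, σ₃]
  ext a b
  fin_cases a <;> fin_cases b <;> simp
  · linear_combination (P2 * s ^ 2 : ℂ) * he
  · linear_combination (P1 * s ^ 2 : ℂ) * he
end

section
/- Let |i⟩ ∈ ℂ² be a unit vector, let p ∈ [0, 1], let p₀, p₁, p₂, p₃ ≥ 0 with Σ_m p_m = 1, let U₀ = I, U₁ = σ₃, U₂ = σ₁, U₃ = −σ₃σ₁, and let ρ_m = U_m†|i⟩⟨i|U_m. Then p·Σ_m p_m U_m ρ_m U_m† + (1−p)·Σ_m p_m (1/4)Σ_{k=0}^{3} U_k ρ_m U_k† = p|i⟩⟨i| + (1−p)·(I/2). Hence if Alice sends the correct message m with probability p and a uniformly random message with probability 1−p, Bob's final state is the mixed qubit p|i⟩⟨i| + (1−p)I/2. -/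
open Matrix

theorem twirl_aux (A : Matrix (Fin 2) (Fin 2) ℂ) (U : Fin 4 → Matrix (Fin 2) (Fin 2) ℂ)
    (hU : U = ![1, σ₃, σ₁, -(σ₃ * σ₁)]) :
    ∑ k : Fin 4, U k * A * (U k)ᴴ = (2 * A.trace) • (1 : Matrix (Fin 2) (Fin 2) ℂ) := by
  subst hU
  ext a b
  fin_cases a <;> fin_cases b <;>
    simp [Fin.sum_univ_four, σ₁, σ₃, Fin.sum_univ_two, Matrix.trace,
      Matrix.vecMul, dotProduct, Matrix.mul_apply] <;> ring

theorem unit_aux (U : Fin 4 → Matrix (Fin 2) (Fin 2) ℂ)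
    (hU : U = ![1, σ₃, σ₁, -(σ₃ * σ₁)]) (m : Fin 4) : U m * (U m)ᴴ = 1 := by
  subst hU
  ext a b
  fin_cases m <;> fin_cases a <;> fin_cases b <;>
    simp [σ₁, σ₃, Matrix.mul_apply, Fin.sum_univ_two]

theorem stmt_10 (iket : Fin 2 → ℂ) (hunit : star iket ⬝ᵥ iket = 1)
    (p : ℝ) (hp0 : 0 ≤ p) (hp1 : p ≤ 1)
    (q : Fin 4 → ℝ) (hq : ∀ m, 0 ≤ q m) (hqsum : ∑ m : Fin 4, q m = 1) :
    let U : Fin 4 → Matrix (Fin 2) (Fin 2) ℂ := ![1, σ₃, σ₁, -(σ₃ * σ₁)]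
    let ρ : Fin 4 → Matrix (Fin 2) (Fin 2) ℂ := fun m => (U m)ᴴ * outer iket * U m
    (p : ℂ) • ∑ m : Fin 4, (q m : ℂ) • (U m * ρ m * (U m)ᴴ) +
        ((1 - p : ℝ) : ℂ) • ∑ m : Fin 4, (q m : ℂ) •
          ((1 / 4 : ℂ) • ∑ k : Fin 4, U k * ρ m * (U k)ᴴ) =
      (p : ℂ) • outer iket +
        ((1 - p : ℝ) : ℂ) • ((1 / 2 : ℂ) • (1 : Matrix (Fin 2) (Fin 2) ℂ)) := by
  intro U ρ
  have h1 : ∀ m, U m * (U m)ᴴ = 1 := unit_aux U rfl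
  have h2 : ∀ m, U m * ρ m * (U m)ᴴ = outer iket := by
    intro m
    calc U m * ρ m * (U m)ᴴ = (U m * (U m)ᴴ) * outer iket * (U m * (U m)ᴴ) := by
          simp only [ρ, Matrix.mul_assoc]
      _ = outer iket := by rw [h1, Matrix.one_mul, Matrix.mul_one]
  have htr : (outer iket).trace = 1 := by
    rw [outer, Matrix.trace_vecMulVec, dotProduct_comm, hunit]
  have h3 : ∀ m, (ρ m).trace = 1 := by
    intro m
    simp only [ρ]
    rw [Matrix.trace_mul_comm, ← Matrix.mul_assoc, h1, Matrix.one_mul, htr]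
  have h4 : ∀ m, ∑ k : Fin 4, U k * ρ m * (U k)ᴴ = (2 : ℂ) • 1 := by
    intro m
    rw [twirl_aux (ρ m) U rfl, h3, mul_one]
  have h5 : ∑ m : Fin 4, (q m : ℂ) = 1 := by exact_mod_cast hqsum
  simp only [h2, h4]
  rw [← Finset.sum_smul, ← Finset.sum_smul, h5, one_smul, one_smul, smul_smul (1 / 4 : ℂ)]
  norm_num
end

section
/- Let K be a real number with K ≥ 2. Then there exists a unique N ∈ [1/2, ∞) satisfying N = (K/2)·sin(π/(4N)). -/
open Real

theorem stmt_16_aux (K : ℝ) (hK : 2 ≤ K) (a b : ℝ) (ha : 1 / 2 ≤ a) (hab : a < b)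
    (h1 : a = K / 2 * Real.sin (π / (4 * a))) (h2 : b = K / 2 * Real.sin (π / (4 * b))) :
    False := by
  have hp := Real.pi_pos
  have hb0 : 0 < π / (4 * b) := div_pos hp (by linarith)
  have hle : π / (4 * b) ≤ π / (4 * a) :=
    div_le_div_of_nonneg_left hp.le (by linarith) (by linarith)
  have ha2 : π / (4 * a) ≤ π / 2 :=
    div_le_div_of_nonneg_left hp.le (by norm_num) (by linarith)
  have hs := Real.sin_le_sin_of_le_of_le_pi_div_two (by linarith) ha2 hle
  have := mul_le_mul_of_nonneg_left hs (show (0 : ℝ) ≤ K / 2 by linarith)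
  linarith

theorem stmt_16 (K : ℝ) (hK : 2 ≤ K) :
    ∃! N : ℝ, N ∈ Set.Ici (1 / 2 : ℝ) ∧ N = K / 2 * Real.sin (π / (4 * N)) := by
  have hc : ContinuousOn (fun N : ℝ => N - K / 2 * Real.sin (π / (4 * N)))
      (Set.Icc (1 / 2) (K / 2)) := by
    apply ContinuousOn.sub continuousOn_id
    apply ContinuousOn.mul continuousOn_const
    apply Real.continuous_sin.comp_continuousOn
    apply ContinuousOn.div continuousOn_const (by fun_prop)
    intro x hx
    have := hx.1
    have : (0 : ℝ) < 4 * x := by linarith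
    exact this.ne'
  have h0 : (0 : ℝ) ∈ Set.Icc ((fun N : ℝ => N - K / 2 * Real.sin (π / (4 * N))) (1 / 2))
      ((fun N : ℝ => N - K / 2 * Real.sin (π / (4 * N))) (K / 2)) := by
    constructor
    · have : π / (4 * (1 / 2)) = π / 2 := by norm_num
      simp only [this, Real.sin_pi_div_two]
      linarith
    · have := mul_le_mul_of_nonneg_left (Real.sin_le_one (π / (4 * (K / 2))))
        (show (0 : ℝ) ≤ K / 2 by linarith)
      simp only
      linarith
  obtain ⟨N, hN, hN0⟩ := intermediate_value_Icc (by linarith) hc h0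
  have hN1 : N = K / 2 * Real.sin (π / (4 * N)) := sub_eq_zero.mp hN0
  refine ⟨N, ⟨hN.1, hN1⟩, ?_⟩
  rintro M ⟨hM, hM1⟩
  rcases lt_trichotomy M N with h | h | h
  · exact (stmt_16_aux K hK M N hM h hM1 hN1).elim
  · exact h
  · exact (stmt_16_aux K hK N M hN.1 h hN1 hM1).elim
end
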